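/- For every integer d ≥ 2 there exists a constant c > 0 such that for every δ > 0 there exists Q with the following property for every prime power q ≥ Q. Let S_p be a p-random subset of 𝔽_q^d (each point included independently with probability p). (a) If 0 ≤ p ≤ q^{−1/(d+1)}·(log q)², then the probability that S_p contains a general position set of size at least c·q^{d/(d+1)}·(log q)² is at most δ. (b) If q^{−1/(d+1)}·(log q)² ≤ p ≤ 1, then the probability that S_p contains a general position set of size at least c·p·q is at most δ. -/

import Mathlib

open scoped Classical

/-- A set `P ⊆ 𝔽_q^d` is in general position if every `(d+1)`-element subset of `P`
is affinely independent. -/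
def IsGenPos (F : Type*) [Field F] (d : ℕ) (P : Set (Fin d → F)) : Prop :=
  ∀ s : Finset (Fin d → F), (↑s : Set (Fin d → F)) ⊆ P → s.card = d + 1 →
    AffineIndependent F ((↑) : s → (Fin d → F))

/-- The probability, under the product Bernoulli distribution in which each point of the
finite ground set `V` is included independently with probability `p`, that the random
subset satisfies the event `E`. -/
noncomputable def bernoulliProb (V : Type*) [Fintype V] (p : ℝ)
    (E : Finset V → Prop) : ℝ :=
  ∑ S : Finset V,
    if E S then p ^ S.card * (1 - p) ^ (Fintype.card V - S.card) else 0

/-!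
Fix `A` with `a + d` points, any `d + 1` of them affinely independent, and join two points that
become affinely dependent when fewer than `d` points of `A` are added; a set in general position
that contains `A` is independent in this graph. For `d - 1` points `B ⊆ A`, the pencil of `q + 1`
hyperplanes through `B` shows that at least `|W|² / (2(q + 1))` pairs in a set `W` disjoint from
`A`, of size at least `2(q + 1)`, are dependent over `B`. A pair independent over `B' ⊆ A` becomes
dependent, and is then an edge, for at most two choices of a further point of `A`; so choosing the
points of `B` one by one by averaging makes the number of pairs dependent over `B` at most
`2(d - 1) / a` times the number of edges in `W`. Hence some vertex of `W` has degree at least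
`a |W| / (4d(q + 1))` in `W`.

The Kleitman–Winston algorithm now encodes each independent set by a fingerprint of
`O((q / a) log q)` points that determines, together with `A`, a container of size at most `4q` for
the other points. For `a ≈ √q` the set `A` and the fingerprint together have `O(√q log q)` points,
so there are `2 ^ O(√q log² q)` containers, and a union bound over them suffices.
-/

open Finset

section Bernoulli

variable {V ι : Type*} [Fintype V] {p : ℝ}

theorem bernoulliProb_superset (p : ℝ) (K : Finset V) :
    bernoulliProb V p (fun S => K ⊆ S) = p ^ #K := by
  have hprod : ∏ v : V, (p + if v ∈ K then 0 else 1 - p) = p ^ #K := by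
    calc ∏ v : V, (p + if v ∈ K then 0 else 1 - p) = ∏ v : V, if v ∈ K then p else 1 :=
          prod_congr rfl fun v _ => by split_ifs <;> ring
      _ = p ^ #K := by simp
  rw [← hprod, prod_add, powerset_univ]
  refine sum_congr rfl fun S _ => ?_
  rw [prod_const]
  split_ifs with hKS
  · have hoff : ∀ v ∈ univ \ S, (if v ∈ K then 0 else 1 - p) = 1 - p := fun v hv =>
      if_neg fun hvK => (mem_sdiff.mp hv).2 (hKS hvK)
    rw [prod_congr rfl hoff, prod_const, card_univ_sdiff]
  · obtain ⟨v, hvK, hvS⟩ := not_subset.mp hKS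
    have hzero : ∏ v ∈ univ \ S, (if v ∈ K then 0 else 1 - p) = 0 :=
      prod_eq_zero (mem_sdiff.mpr ⟨mem_univ v, hvS⟩) (if_pos hvK)
    rw [hzero, mul_zero]

theorem bernoulliProb_le_sum (hp0 : 0 ≤ p) (hp1 : p ≤ 1) {E : Finset V → Prop} (s : Finset ι)
    {E' : ι → Finset V → Prop} (h : ∀ S, E S → ∃ i ∈ s, E' i S) :
    bernoulliProb V p E ≤ ∑ i ∈ s, bernoulliProb V p (E' i) := by
  unfold bernoulliProb
  rw [sum_comm]
  refine sum_le_sum fun S _ => ?_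
  have hweight : 0 ≤ p ^ #S * (1 - p) ^ (Fintype.card V - #S) :=
    mul_nonneg (pow_nonneg hp0 _) (pow_nonneg (sub_nonneg.mpr hp1) _)
  have hterm : ∀ i ∈ s, 0 ≤ if E' i S then p ^ #S * (1 - p) ^ (Fintype.card V - #S) else 0 :=
    fun i _ => by split_ifs <;> [exact hweight; exact le_rfl]
  split_ifs with hE
  · obtain ⟨i, hi, hE'⟩ := h S hE
    exact (if_pos hE').ge.trans (single_le_sum hterm hi)
  · exact sum_nonneg hterm

theorem bernoulliProb_le_card_inter [DecidableEq V] (hp0 : 0 ≤ p) (hp1 : p ≤ 1) (C : Finset V)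
    (k : ℕ) : bernoulliProb V p (fun S => k ≤ #(S ∩ C)) ≤ (#C).choose k * p ^ k := by
  calc bernoulliProb V p (fun S => k ≤ #(S ∩ C))
      ≤ ∑ K ∈ C.powersetCard k, bernoulliProb V p (fun S => K ⊆ S) := by
        refine bernoulliProb_le_sum hp0 hp1 _ fun S hS => ?_
        obtain ⟨K, hK, hKk⟩ := exists_subset_card_eq hS
        exact ⟨K, mem_powersetCard.mpr ⟨hK.trans inter_subset_right, hKk⟩,
          hK.trans inter_subset_left⟩
    _ = ∑ _K ∈ C.powersetCard k, p ^ k := sum_congr rfl fun K hK => by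
        rw [bernoulliProb_superset, (mem_powersetCard.mp hK).2]
    _ = (#C).choose k * p ^ k := by simp

theorem bernoulliProb_le_of_containers [DecidableEq V] (hp0 : 0 ≤ p) (hp1 : p ≤ 1)
    {E : Finset V → Prop} (s : Finset ι) {C : ι → Finset V} {R k : ℕ} (hC : ∀ i ∈ s, #(C i) ≤ R)
    (hE : ∀ S, E S → ∃ i ∈ s, k ≤ #(S ∩ C i)) :
    bernoulliProb V p E ≤ #s * (R.choose k * p ^ k) := by
  calc bernoulliProb V p E
      ≤ ∑ i ∈ s, bernoulliProb V p (fun S => k ≤ #(S ∩ C i)) := bernoulliProb_le_sum hp0 hp1 s hE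
    _ ≤ ∑ _i ∈ s, R.choose k * p ^ k := by
        refine sum_le_sum fun i hi => (bernoulliProb_le_card_inter hp0 hp1 (C i) k).trans ?_
        gcongr
        exact hC i hi
    _ = #s * (R.choose k * p ^ k) := by rw [sum_const, nsmul_eq_mul]

end Bernoulli

section Counting

theorem card_filter_card_le_le_pow (V : Type*) [Fintype V] (n : ℕ) :
    #{S : Finset V | #S ≤ n} ≤ (Fintype.card V + 1) ^ n := by
  have hmaps : ∀ S ∈ ({S : Finset V | #S ≤ n} : Finset (Finset V)), #S ∈ range (n + 1) := by
    simp
  have hlayer : ∀ i ∈ range (n + 1), #{S ∈ ({S : Finset V | #S ≤ n} : Finset _) | #S = i} ≤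
      (Fintype.card V).choose i := fun i _ => by
    rw [← card_univ, ← card_powersetCard]
    exact card_le_card fun S hS => mem_powersetCard.mpr ⟨subset_univ S, (mem_filter.mp hS).2⟩
  calc #{S : Finset V | #S ≤ n}
      = ∑ i ∈ range (n + 1), #{S ∈ ({S : Finset V | #S ≤ n} : Finset _) | #S = i} :=
        card_eq_sum_card_fiberwise hmaps
    _ ≤ ∑ i ∈ range (n + 1), Fintype.card V ^ i * 1 ^ (n - i) * n.choose i := by
        refine sum_le_sum fun i hi => ((hlayer i hi).trans (Nat.choose_le_pow _ _)).trans ?_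
        rw [one_pow, mul_one]
        exact Nat.le_mul_of_pos_right _ (Nat.choose_pos (Nat.lt_succ_iff.mp (mem_range.mp hi)))
    _ = (Fintype.card V + 1) ^ n := (add_pow _ _ _).symm

theorem sq_card_le_card_mul_card_filter_eq {α β : Type*} [Fintype β] [DecidableEq β]
    (s : Finset α) (f : α → β) :
    #s ^ 2 ≤ Fintype.card β * #{z ∈ s ×ˢ s | f z.1 = f z.2} := by
  have hfiber : ∀ b, #{z ∈ {z ∈ s ×ˢ s | f z.1 = f z.2} | f z.1 = b} = #{x ∈ s | f x = b} ^ 2 := by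
    intro b
    rw [sq, ← card_product]
    congr 1
    ext z
    simp only [mem_product, mem_filter]
    grind
  calc #s ^ 2 = (∑ b, #{x ∈ s | f x = b}) ^ 2 := by
        rw [← card_eq_sum_card_fiberwise fun _ _ => mem_coe.mpr (mem_univ _)]
    _ ≤ Fintype.card β * ∑ b, #{x ∈ s | f x = b} ^ 2 := sq_sum_le_card_mul_sum_sq
    _ = Fintype.card β * #{z ∈ s ×ˢ s | f z.1 = f z.2} := by
        rw [card_eq_sum_card_fiberwise (f := fun z => f z.1) (t := univ)
          fun _ _ => mem_coe.mpr (mem_univ _)]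
        simp_rw [hfiber]

theorem choose_mul_pow_le_inv_four_pow {n k : ℕ} {p : ℝ} (hp : 0 ≤ p) (h : 12 * (p * n) ≤ k) :
    n.choose k * p ^ k ≤ (1 / 4) ^ k := by
  have hpow : (k : ℝ) ^ k / k.factorial ≤ 3 ^ k := by
    calc (k : ℝ) ^ k / k.factorial ≤ Real.exp k :=
          Real.pow_div_factorial_le_exp _ (Nat.cast_nonneg k) k
      _ = Real.exp 1 ^ k := by rw [← Real.exp_nat_mul, mul_one]
      _ ≤ 3 ^ k := by gcongr; linarith [Real.exp_one_lt_d9]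
  calc n.choose k * p ^ k ≤ (n : ℝ) ^ k / k.factorial * p ^ k := by
        gcongr
        exact Nat.choose_le_pow_div k n
    _ = (p * n) ^ k / k.factorial := by rw [mul_pow]; ring
    _ ≤ (k / 12) ^ k / k.factorial := by gcongr; linarith
    _ = (1 / 12) ^ k * (k ^ k / k.factorial) := by rw [div_pow, one_div_pow]; ring
    _ ≤ (1 / 12) ^ k * 3 ^ k := by gcongr
    _ = (1 / 4) ^ k := by rw [← mul_pow]; norm_num

end Counting

section Containers

variable {V : Type*} [DecidableEq V] {G : SimpleGraph V}

/-- Every independent set `I ⊆ X` of `G` consists of a fingerprint `S` of at most `f` vertices and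
of vertices of a container `C S`, where `C S` has at most `R` elements and depends on `I` only
through `S`. -/
def HasContainers (G : SimpleGraph V) (R f : ℕ) (X : Finset V) : Prop :=
  ∃ C : Finset V → Finset V, (∀ S, #(C S) ≤ R) ∧
    ∀ I ⊆ X, G.IsIndepSet I → ∃ S ⊆ I, #S ≤ f ∧ I ⊆ S ∪ C S

theorem HasContainers.of_card_le {R : ℕ} (f : ℕ) {X : Finset V} (hX : #X ≤ R) :
    HasContainers G R f X :=
  ⟨fun _ => X, fun _ => hX, fun I hI _ => ⟨∅, empty_subset I, Nat.zero_le f, by simpa using hI⟩⟩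

theorem HasContainers.of_erase_of_filter_not_adj {R f : ℕ} {X : Finset V} {v : V}
    (herase : HasContainers G R (f + 1) (X.erase v))
    (hnonadj : HasContainers G R f {y ∈ X.erase v | ¬ G.Adj v y}) :
    HasContainers G R (f + 1) X := by
  obtain ⟨C₁, hC₁, h₁⟩ := herase
  obtain ⟨C₂, hC₂, h₂⟩ := hnonadj
  refine ⟨fun S => if v ∈ S then C₂ (S.erase v) else C₁ S, fun S => ?_, fun I hIX hI => ?_⟩
  · dsimp only
    split_ifs <;> [exact hC₂ _; exact hC₁ _]
  by_cases hvI : v ∈ I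
  · have hsub : I.erase v ⊆ {y ∈ X.erase v | ¬ G.Adj v y} := fun y hy => by
      obtain ⟨hyv, hyI⟩ := mem_erase.mp hy
      exact mem_filter.mpr ⟨mem_erase.mpr ⟨hyv, hIX hyI⟩, hI hvI hyI hyv.symm⟩
    obtain ⟨S, hSI, hSf, hIS⟩ := h₂ (I.erase v) hsub (hI.mono (coe_subset.mpr (erase_subset v I)))
    have hvS : v ∉ S := fun hv => notMem_erase v I (hSI hv)
    refine ⟨insert v S, insert_subset hvI (hSI.trans (erase_subset v I)), ?_, ?_⟩
    · exact (card_insert_le v S).trans (Nat.succ_le_succ hSf)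
    · simp only [mem_insert_self, if_true, erase_insert hvS, insert_union]
      exact subset_insert_iff.mpr hIS
  · obtain ⟨S, hSI, hSf, hIS⟩ := h₁ I (subset_erase.mpr ⟨hIX, hvI⟩) hI
    refine ⟨S, hSI, hSf, ?_⟩
    simpa only [if_neg (notMem_mono hSI hvI)] using hIS

/-- The Kleitman–Winston algorithm: branch on a vertex `v` of large degree. If `v ∈ I`, put `v` into
the fingerprint, which removes a proportion `β` of the vertices; otherwise just delete `v`. -/
theorem hasContainers_of_forall_exists_degree_ge {β : ℝ} {R : ℕ} (f : ℕ) {X : Finset V}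
    (hdeg : ∀ W ⊆ X, R < #W → ∃ v ∈ W, β * #W ≤ #{y ∈ W | G.Adj v y})
    (hX : #X * Real.exp (-(β * f)) ≤ R) : HasContainers G R f X := by
  induction X using Finset.strongInduction generalizing f with
  | H X ih =>
    rcases le_or_gt #X R with hXR | hXR
    · exact .of_card_le f hXR
    obtain _ | f := f
    · exact .of_card_le 0 (by simpa using hX)
    obtain ⟨v, hvX, hv⟩ := hdeg X Subset.rfl hXR
    have hsub := (filter_subset (fun y => ¬ G.Adj v y) _).trans (erase_subset v X)
    have hcard : (#{y ∈ X.erase v | ¬ G.Adj v y} : ℝ) ≤ #X * Real.exp (-β) := by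
      have hpart := card_filter_add_card_filter_not (s := X) (G.Adj v)
      calc (#{y ∈ X.erase v | ¬ G.Adj v y} : ℝ) ≤ #{y ∈ X | ¬ G.Adj v y} := by
            gcongr
            exact erase_subset v X
        _ = #X - #{y ∈ X | G.Adj v y} := by rw [← hpart]; push_cast; ring
        _ ≤ #X * (1 - β) := by linarith
        _ ≤ #X * Real.exp (-β) := by
            gcongr
            exact Real.one_sub_le_exp_neg β
    refine .of_erase_of_filter_not_adj (v := v) ?_ ?_
    · refine ih _ (erase_ssubset hvX) (f + 1) (fun W hW => hdeg W (hW.trans (erase_subset v X)))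
        (le_trans ?_ hX)
      gcongr
      exact erase_subset v X
    · refine ih _ ((filter_subset _ _).trans_ssubset (erase_ssubset hvX)) f
        (fun W hW => hdeg W (hW.trans hsub)) (le_trans ?_ hX)
      calc (#{y ∈ X.erase v | ¬ G.Adj v y} : ℝ) * Real.exp (-(β * f))
          ≤ #X * Real.exp (-β) * Real.exp (-(β * f)) := by gcongr
        _ = #X * Real.exp (-(β * (f + 1 : ℕ))) := by
            rw [mul_assoc, ← Real.exp_add]
            push_cast
            ring_nf

end Containers

section AffineIndependence

variable {K V : Type*} [Field K] [AddCommGroup V] [Module K V]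

/-- Affine independence of a finite set of points, that is, of the family given by its inclusion. -/
def AffineIndep (K : Type*) {V : Type*} [Field K] [AddCommGroup V] [Module K V] (X : Finset V) :
    Prop :=
  AffineIndependent K ((↑) : X → V)

theorem AffineIndep.mono {X Y : Finset V} (hY : AffineIndep K Y) (hXY : X ⊆ Y) :
    AffineIndep K X :=
  AffineIndependent.mono (t := (Y : Set V)) hY (coe_subset.mpr hXY)

theorem affineIndep_singleton (x : V) : AffineIndep K {x} :=
  affineIndependent_of_subsingleton K _

theorem AffineIndep.insert_of_notMem_affineSpan [DecidableEq V] {X : Finset V} {x : V}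
    (hX : AffineIndep K X) (hx : x ∉ affineSpan K (X : Set V)) : AffineIndep K (insert x X) := by
  let x' : ↥(insert x X) := ⟨x, mem_insert_self x X⟩
  have hmem : ∀ y : ↥(insert x X), y ≠ x' → (y : V) ∈ X := fun y hy =>
    (mem_insert.mp y.2).resolve_left fun h => hy (Subtype.ext h)
  refine AffineIndependent.affineIndependent_of_notMem_span (i := x') ?_ fun h => hx ?_
  · exact AffineIndependent.comp_embedding
      ⟨fun y : {y // y ≠ x'} => (⟨y, hmem y y.2⟩ : X),
        fun y z hyz => Subtype.ext (Subtype.ext (Subtype.mk.inj hyz))⟩ hX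
  · refine affineSpan_mono K ?_ h
    rintro _ ⟨y, hy, rfl⟩
    exact mem_coe.mpr (hmem y hy)

theorem card_filter_mem_affineSpan_le {A Y : Finset V} {n : ℕ}
    (hA : ∀ X ⊆ A, #X ≤ n → AffineIndep K X) (hY : #Y < n) :
    #{x ∈ A | x ∈ affineSpan K (Y : Set V)} ≤ #Y := by
  by_contra! hlt
  obtain ⟨X, hX, hXcard⟩ := exists_subset_card_eq (Nat.succ_le_of_lt hlt)
  have hXY : #X ≤ #Y := (hA X (hX.trans (filter_subset _ _)) (by omega))
    |>.card_le_card_of_subset_affineSpan fun x hx => (mem_filter.mp (hX hx)).2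
  omega

theorem AffineIndep.eq_zero_of_card_eq_finrank_add_one [FiniteDimensional K V] {X : Finset V}
    (hX : AffineIndep K X) (hcard : #X = Module.finrank K V + 1) {g : V →ᵃ[K] K}
    (hg : ∀ x ∈ X, g x = 0) : g = 0 := by
  have hspan : affineSpan K (Set.range ((↑) : X → V)) = ⊤ :=
    (AffineIndependent.affineSpan_eq_top_iff_card_eq_finrank_add_one hX).mpr
      ((Fintype.card_coe X).trans hcard)
  refine AffineMap.ext_on hspan ?_
  rintro _ ⟨x, rfl⟩
  exact hg x x.2

theorem exists_linearIndependent_pair_vanishing [FiniteDimensional K V] {T : Finset V}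
    (hT : #T < Module.finrank K V) :
    ∃ g₀ g₁ : V →ᵃ[K] K, LinearIndependent K ![g₀, g₁] ∧ ∀ t ∈ T, g₀ t = 0 ∧ g₁ t = 0 := by
  let ev : (V →ᵃ[K] K) →ₗ[K] (T → K) :=
    { toFun := fun g t => g t
      map_add' := fun _ _ => rfl
      map_smul' := fun _ _ => rfl }
  have hrank : Module.finrank K ev.range + Module.finrank K ev.ker = Module.finrank K V + 1 := by
    rw [ev.finrank_range_add_finrank_ker, AffineMap.finrank_eq, Module.finrank_self, mul_one]
  have hrange : Module.finrank K ev.range ≤ #T := by simpa using Submodule.finrank_le ev.range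
  obtain ⟨g, hg⟩ := exists_linearIndependent_of_le_finrank
    (show 2 ≤ Module.finrank K ev.ker by omega)
  refine ⟨g 0, g 1, ?_, fun t ht => ⟨congrFun (g 0).2 ⟨t, ht⟩, congrFun (g 1).2 ⟨t, ht⟩⟩⟩
  have hcomp : ev.ker.subtype ∘ g = ![↑(g 0), ↑(g 1)] := by
    ext1 i
    fin_cases i <;> rfl
  exact hcomp ▸ hg.map' ev.ker.subtype ev.ker.ker_subtype

/-- A pencil of hyperplanes `c₀ g₀ + c₁ g₁ = 0` through `T`, one for each point `[c₀ : c₁]` of the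
projective line, covers the space; points outside `T` are coloured by the hyperplane containing
them, encoded as the value of `g₀ / g₁` in `K ∪ {∞}`. -/
theorem exists_coloring_not_affineIndep [DecidableEq V] [FiniteDimensional K V] {T : Finset V}
    (hT : #T + 1 = Module.finrank K V) :
    ∃ color : V → Option K, ∀ x y, x ≠ y → x ∉ T → y ∉ T → color x = color y →
      ¬ AffineIndep K (insert x (insert y T)) := by
  obtain ⟨g₀, g₁, hg, hgT⟩ := exists_linearIndependent_pair_vanishing (K := K) (by omega : #T < _)
  refine ⟨fun x => if g₁ x = 0 then none else some (g₀ x / g₁ x),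
    fun x y hxy hx hy hcolor hindep => ?_⟩
  have hcard : #(insert x (insert y T)) = Module.finrank K V + 1 := by
    rw [card_insert_of_notMem (by simp [hxy, hx]), card_insert_of_notMem hy, hT]
  obtain ⟨c₀, c₁, hc, hcx, hcy⟩ : ∃ c₀ c₁ : K, (c₀ = 0 → c₁ ≠ 0) ∧
      c₀ * g₀ x + c₁ * g₁ x = 0 ∧ c₀ * g₀ y + c₁ * g₁ y = 0 := by
    dsimp only at hcolor
    split_ifs at hcolor with hx₁ hy₁ hy₁
    · exact ⟨0, 1, by simp, by simp [hx₁], by simp [hy₁]⟩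
    · have hratio := (div_eq_div_iff hx₁ hy₁).mp (Option.some.inj hcolor)
      exact ⟨g₁ x, -g₀ x, fun h => absurd h hx₁, by ring, by linear_combination -hratio⟩
  have hzero : c₀ • g₀ + c₁ • g₁ = 0 := by
    refine hindep.eq_zero_of_card_eq_finrank_add_one hcard fun z hz => ?_
    rw [AffineMap.coe_add, AffineMap.coe_smul, AffineMap.coe_smul]
    simp only [Pi.add_apply, Pi.smul_apply, smul_eq_mul]
    rcases mem_insert.mp hz with rfl | hz
    · exact hcx
    rcases mem_insert.mp hz with rfl | hz
    · exact hcy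
    · simp [hgT z hz]
  obtain ⟨hc₀, hc₁⟩ := LinearIndependent.pair_iff.mp hg c₀ c₁ hzero
  exact hc hc₀ hc₁

end AffineIndependence

section DependencyGraph

variable {K V : Type*} [Field K] [AddCommGroup V] [Module K V] [DecidableEq V]
  {d a : ℕ} {A B T W : Finset V}

/-- The ordered pairs of distinct points of `W` that form, together with `T`, an affinely dependent
set; their number is compared with the number of edges of `dependencyGraph`. -/
noncomputable def dependentPairs (K : Type*) {V : Type*} [Field K] [AddCommGroup V] [Module K V]
    [DecidableEq V] (T W : Finset V) : Finset (V × V) :=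
  {z ∈ W ×ˢ W | z.1 ≠ z.2 ∧ ¬ AffineIndep K (insert z.1 (insert z.2 T))}

/-- The graph joining two points that become affinely dependent when fewer than `d` suitable points
of `A` are added. Every set in general position in dimension `d` that contains `A` is independent
in it. -/
def dependencyGraph (K : Type*) {V : Type*} [Field K] [AddCommGroup V] [Module K V]
    [DecidableEq V] (d : ℕ) (A : Finset V) : SimpleGraph V where
  Adj x y := x ≠ y ∧ ∃ T ⊆ A, #T < d ∧ ¬ AffineIndep K (insert x (insert y T))
  symm := ⟨fun _ _ ⟨hxy, T, hTA, hTd, hdep⟩ => ⟨hxy.symm, T, hTA, hTd, by rwa [insert_comm]⟩⟩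
  loopless := ⟨fun _ h => h.1 rfl⟩

theorem dependentPairs_empty (W : Finset V) : dependentPairs K ∅ W = ∅ := by
  refine filter_eq_empty_iff.mpr fun z _ ⟨hne, hdep⟩ => hdep ?_
  exact (affineIndep_singleton z.2).insert_of_notMem_affineSpan (by simpa using hne)

theorem sq_card_le_mul_card_dependentPairs_add [Fintype K] [FiniteDimensional K V]
    (hT : #T + 1 = Module.finrank K V) (hWT : Disjoint W T) :
    #W ^ 2 ≤ (Fintype.card K + 1) * (#(dependentPairs K T W) + #W) := by
  obtain ⟨color, hcolor⟩ := exists_coloring_not_affineIndep hT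
  have hsub : {z ∈ W ×ˢ W | color z.1 = color z.2} ⊆ dependentPairs K T W ∪ W.diag := by
    rintro ⟨x, y⟩ hz
    obtain ⟨hW, hc⟩ := mem_filter.mp hz
    obtain ⟨hx, hy⟩ := mem_product.mp hW
    rcases eq_or_ne x y with rfl | hxy
    · exact mem_union_right _ (mem_diag.mpr ⟨hx, rfl⟩)
    · exact mem_union_left _ (mem_filter.mpr ⟨hW, hxy, hcolor x y hxy
        (disjoint_left.mp hWT hx) (disjoint_left.mp hWT hy) hc⟩)
  calc #W ^ 2 ≤ Fintype.card (Option K) * #{z ∈ W ×ˢ W | color z.1 = color z.2} :=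
        sq_card_le_card_mul_card_filter_eq W color
    _ ≤ (Fintype.card K + 1) * (#(dependentPairs K T W) + #W) := by
        rw [Fintype.card_option, ← diag_card W]
        exact Nat.mul_le_mul_left _ ((card_le_card hsub).trans (card_union_le _ _))

/-- The points counted here lie in the span of `Y`, and so do the points of `B`; but at most `#Y`
points of `A` do. -/
theorem card_filter_not_affineIndep_insert_add_le {Y : Finset V}
    (hA : ∀ X ⊆ A, #X ≤ d + 1 → AffineIndep K X) (hBA : B ⊆ A) (hBY : B ⊆ Y)
    (hY : AffineIndep K Y) (hYd : #Y ≤ d) :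
    #{p ∈ A \ B | ¬ AffineIndep K (insert p Y)} + #B ≤ #Y := by
  have hdisj : Disjoint {p ∈ A \ B | ¬ AffineIndep K (insert p Y)} B :=
    disjoint_of_subset_left (filter_subset _ _) sdiff_disjoint
  rw [← card_union_of_disjoint hdisj]
  refine (card_le_card fun x hx => ?_).trans (card_filter_mem_affineSpan_le hA (by omega))
  rcases mem_union.mp hx with hx | hx
  · obtain ⟨hxA, hdep⟩ := mem_filter.mp hx
    refine mem_filter.mpr ⟨(mem_sdiff.mp hxA).1, ?_⟩
    by_contra hspan
    exact hdep (hY.insert_of_notMem_affineSpan hspan)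
  · exact mem_filter.mpr ⟨hBA hx, subset_affineSpan K _ (hBY hx)⟩

theorem sum_card_dependentPairs_insert_le
    (hA : ∀ X ⊆ A, #X ≤ d + 1 → AffineIndep K X) (hBA : B ⊆ A) (hBd : #B + 2 ≤ d) :
    ∑ p ∈ A \ B, #(dependentPairs K (insert p B) W) ≤
      #(A \ B) * #(dependentPairs K B W) + 2 * #((dependencyGraph K d A).interedges W W) := by
  simp only [dependentPairs, SimpleGraph.interedges, Rel.interedges, card_filter]
  rw [sum_comm, mul_sum, mul_sum, ← sum_add_distrib]
  refine sum_le_sum fun ⟨x, y⟩ _ => ?_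
  rw [← card_filter]
  rcases eq_or_ne x y with rfl | hxy
  · simp
  simp only [ne_eq, hxy, not_false_eq_true, true_and]
  by_cases hdep : AffineIndep K (insert x (insert y B))
  swap
  · rw [if_pos hdep, mul_one]
    exact (card_filter_le _ _).trans (Nat.le_add_right _ _)
  have hcard : #(insert x (insert y B)) ≤ #B + 2 := by
    grw [card_insert_le, card_insert_le]
  have hcomm : ∀ p, insert x (insert y (insert p B)) = insert p (insert x (insert y B)) :=
    fun p => by rw [insert_comm y p, insert_comm x p]
  have htwo := card_filter_not_affineIndep_insert_add_le hA hBA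
    ((subset_insert y B).trans (subset_insert x _)) hdep (hcard.trans hBd)
  simp only [hcomm]
  by_cases hadj : (dependencyGraph K d A).Adj x y
  · rw [if_pos hadj]
    omega
  · rw [filter_eq_empty_iff.mpr, card_empty]
    · exact Nat.zero_le _
    · intro p hp hpdep
      refine hadj ⟨hxy, insert p B, insert_subset (mem_sdiff.mp hp).1 hBA, ?_, by rwa [hcomm]⟩
      exact (card_insert_le p B).trans_lt (by omega)

theorem exists_mul_card_dependentPairs_le (hAcard : a + d ≤ #A) (ha : 0 < a)
    (hA : ∀ X ⊆ A, #X ≤ d + 1 → AffineIndep K X) (W : Finset V) {j : ℕ} (hj : j < d) :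
    ∃ B ⊆ A, #B = j ∧
      a * #(dependentPairs K B W) ≤ 2 * j * #((dependencyGraph K d A).interedges W W) := by
  induction j with
  | zero => exact ⟨∅, empty_subset A, rfl, by simp [dependentPairs_empty]⟩
  | succ j ih =>
    obtain ⟨B, hBA, rfl, hB⟩ := ih (by omega)
    set E := #((dependencyGraph K d A).interedges W W)
    have hsdiff : a ≤ #(A \ B) := by
      have := le_card_sdiff B A
      omega
    obtain ⟨p, hp, hle⟩ : ∃ p ∈ A \ B, #(A \ B) * #(dependentPairs K (insert p B) W) ≤
        #(A \ B) * #(dependentPairs K B W) + 2 * E := by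
      refine exists_le_of_sum_le (card_pos.mp (ha.trans_le hsdiff)) ?_
      rw [← mul_sum, sum_const, smul_eq_mul]
      exact Nat.mul_le_mul_left _ (sum_card_dependentPairs_insert_le hA hBA hj)
    obtain ⟨hpA, hpB⟩ := mem_sdiff.mp hp
    refine ⟨insert p B, insert_subset hpA hBA, card_insert_of_notMem hpB, ?_⟩
    have hstep : a * #(dependentPairs K (insert p B) W) ≤ a * #(dependentPairs K B W) + 2 * E := by
      by_contra! hlt
      nlinarith
    linarith

theorem mul_sq_card_le_mul_card_interedges [Fintype K] [FiniteDimensional K V]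
    (hd : 0 < Module.finrank K V) (ha : 0 < a) (hAcard : a + Module.finrank K V ≤ #A)
    (hA : ∀ X ⊆ A, #X ≤ Module.finrank K V + 1 → AffineIndep K X) (hWA : Disjoint W A)
    (hW : 2 * (Fintype.card K + 1) ≤ #W) :
    a * #W ^ 2 ≤ 4 * (Fintype.card K + 1) * Module.finrank K V *
      #((dependencyGraph K (Module.finrank K V) A).interedges W W) := by
  set d := Module.finrank K V
  obtain ⟨B, hBA, hBd, hB⟩ :=
    exists_mul_card_dependentPairs_le hAcard ha hA W (Nat.sub_one_lt_of_lt hd)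
  have hpairs := sq_card_le_mul_card_dependentPairs_add (K := K) (by omega : #B + 1 = d)
    (disjoint_of_subset_right hBA hWA)
  set q := Fintype.card K
  set E := #((dependencyGraph K d A).interedges W W)
  set N := #(dependentPairs K B W)
  have hsq : #W ^ 2 ≤ 2 * (q + 1) * N := by nlinarith
  calc a * #W ^ 2 ≤ a * (2 * (q + 1) * N) := Nat.mul_le_mul_left a hsq
    _ = 2 * (q + 1) * (a * N) := by ring
    _ ≤ 2 * (q + 1) * (2 * (d - 1) * E) := Nat.mul_le_mul_left _ hB
    _ ≤ 2 * (q + 1) * (2 * d * E) := by gcongr; exact Nat.sub_le d 1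
    _ = 4 * (q + 1) * d * E := by ring

theorem exists_degree_dependencyGraph_ge [Fintype K] [FiniteDimensional K V]
    (hd : 0 < Module.finrank K V) (ha : 0 < a) (hAcard : a + Module.finrank K V ≤ #A)
    (hA : ∀ X ⊆ A, #X ≤ Module.finrank K V + 1 → AffineIndep K X) (hWA : Disjoint W A)
    (hW : 2 * (Fintype.card K + 1) ≤ #W) :
    ∃ v ∈ W, (a / (4 * (Fintype.card K + 1) * Module.finrank K V) : ℝ) * #W ≤
      #{y ∈ W | (dependencyGraph K (Module.finrank K V) A).Adj v y} := by
  have hedges := mul_sq_card_le_mul_card_interedges hd ha hAcard hA hWA hW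
  set d := Module.finrank K V
  set D := 4 * (Fintype.card K + 1) * d
  have hdeg : #((dependencyGraph K d A).interedges W W) =
      ∑ v ∈ W, #{y ∈ W | (dependencyGraph K d A).Adj v y} := by
    simp only [SimpleGraph.interedges, Rel.interedges, card_filter, sum_product]
  obtain ⟨v, hvW, hv⟩ : ∃ v ∈ W, a * #W ≤ D * #{y ∈ W | (dependencyGraph K d A).Adj v y} := by
    refine exists_le_of_sum_le (card_pos.mp (by omega)) ?_
    rw [sum_const, smul_eq_mul, ← mul_sum, ← hdeg]
    linarith
  refine ⟨v, hvW, ?_⟩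
  have hD : (4 * (Fintype.card K + 1) * d : ℝ) = (D : ℕ) := by push_cast [D]; ring
  rw [hD, div_mul_eq_mul_div, div_le_iff₀ (by positivity), mul_comm (_ : ℝ) (D : ℝ)]
  exact_mod_cast hv

theorem hasContainers_dependencyGraph [Fintype K] [FiniteDimensional K V]
    (hd : 0 < Module.finrank K V) (ha : 0 < a) (hAcard : a + Module.finrank K V ≤ #A)
    (hA : ∀ X ⊆ A, #X ≤ Module.finrank K V + 1 → AffineIndep K X) {X : Finset V}
    (hXA : Disjoint X A) {f : ℕ}
    (hX : #X * Real.exp (-(a / (4 * (Fintype.card K + 1) * Module.finrank K V) * f)) ≤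
      4 * Fintype.card K) :
    HasContainers (dependencyGraph K (Module.finrank K V) A) (4 * Fintype.card K) f X := by
  refine hasContainers_of_forall_exists_degree_ge f (fun W hWX hW => ?_)
    (hX.trans_eq (by push_cast; rfl))
  have hK : 0 < Fintype.card K := Fintype.card_pos
  exact exists_degree_dependencyGraph_ge hd ha hAcard hA (disjoint_of_subset_left hWX hXA)
    (by omega)

end DependencyGraph

section GeneralPosition

variable {F : Type*} [Field F] {d : ℕ} {A I X : Finset (Fin d → F)}

theorem IsGenPos.affineIndep_of_card_le (hI : IsGenPos F d ↑I) (hId : d + 1 ≤ #I) (hXI : X ⊆ I)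
    (hX : #X ≤ d + 1) : AffineIndep F X := by
  obtain ⟨Y, hXY, hYI, hY⟩ := exists_subsuperset_card_eq hXI hX hId
  exact AffineIndep.mono (hI Y (coe_subset.mpr hYI) hY) hXY

theorem IsGenPos.isIndepSet_dependencyGraph (hI : IsGenPos F d ↑I) (hId : d + 1 ≤ #I)
    (hAI : A ⊆ I) : (dependencyGraph F d A).IsIndepSet ↑I := by
  rintro x hx y hy - ⟨-, T, hTA, hTd, hdep⟩
  refine hdep (hI.affineIndep_of_card_le hId
    (insert_subset hx (insert_subset hy (hTA.trans hAI))) ?_)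
  grw [card_insert_le, card_insert_le]
  omega

variable [Fintype F] {a f : ℕ}

theorem exists_containers_of_isGenPos (hd : 0 < d) (ha : 0 < a)
    (hf : (Fintype.card F : ℝ) ^ d * Real.exp (-(a / (4 * (Fintype.card F + 1) * d) * f)) ≤
      4 * Fintype.card F) :
    ∃ C : Finset (Fin d → F) → Finset (Fin d → F) → Finset (Fin d → F),
      (∀ A S, #(C A S) ≤ 4 * Fintype.card F) ∧
      ∀ I : Finset (Fin d → F), IsGenPos F d ↑I → a + d ≤ #I →
        ∃ A S, #A ≤ a + d ∧ #S ≤ f ∧ I ⊆ A ∪ S ∪ C A S := by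
  have hC : ∀ A : Finset (Fin d → F), ∃ C : Finset (Fin d → F) → Finset (Fin d → F),
      (∀ S, #(C S) ≤ 4 * Fintype.card F) ∧
      (a + d ≤ #A → (∀ X ⊆ A, #X ≤ d + 1 → AffineIndep F X) → ∀ I ⊆ Aᶜ,
        (dependencyGraph F d A).IsIndepSet ↑I → ∃ S ⊆ I, #S ≤ f ∧ I ⊆ S ∪ C S) := by
    intro A
    by_cases hA : a + d ≤ #A ∧ ∀ X ⊆ A, #X ≤ d + 1 → AffineIndep F X
    · have hrank : Module.finrank F (Fin d → F) = d := Module.finrank_fin_fun F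
      have hcont := hasContainers_dependencyGraph (K := F) (A := A) (X := Aᶜ) (f := f)
        (hrank.symm ▸ hd) ha (hrank.symm ▸ hA.1) (hrank.symm ▸ hA.2) disjoint_compl_left ?_
      · rw [hrank] at hcont
        obtain ⟨C, hCcard, hC⟩ := hcont
        exact ⟨C, hCcard, fun _ _ => hC⟩
      · have hcompl : (#Aᶜ : ℝ) ≤ (Fintype.card F : ℝ) ^ d := by
          exact_mod_cast (card_le_univ Aᶜ).trans (by simp)
        rw [hrank]
        exact (mul_le_mul_of_nonneg_right hcompl (Real.exp_nonneg _)).trans hf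
    · exact ⟨fun _ => ∅, fun _ => by simp, fun h₁ h₂ => absurd ⟨h₁, h₂⟩ hA⟩
  choose C hCcard hC using hC
  refine ⟨C, hCcard, fun I hI hcard => ?_⟩
  obtain ⟨A, hAI, hA⟩ := exists_subset_card_eq hcard
  have hId : d + 1 ≤ #I := by omega
  obtain ⟨S, -, hS, hIS⟩ := hC A hA.ge
    (fun X hX => hI.affineIndep_of_card_le hId (hX.trans hAI)) (I \ A)
    (fun x hx => mem_compl.mpr (mem_sdiff.mp hx).2)
    ((hI.isIndepSet_dependencyGraph hId hAI).mono (coe_subset.mpr sdiff_subset))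
  refine ⟨A, S, hA.le, hS, ?_⟩
  rw [union_assoc]
  exact sdiff_le_iff.mp hIS

theorem bernoulliProb_exists_isGenPos_le {k : ℕ} {p M : ℝ} (hp0 : 0 ≤ p) (hp1 : p ≤ 1)
    (hd : 0 < d) (ha : 0 < a)
    (hf : (Fintype.card F : ℝ) ^ d * Real.exp (-(a / (4 * (Fintype.card F + 1) * d) * f)) ≤
      4 * Fintype.card F)
    (hM : (a + d + f + k : ℕ) ≤ M) :
    bernoulliProb (Fin d → F) p (fun S => ∃ T, T ⊆ S ∧ IsGenPos F d ↑T ∧ M ≤ #T) ≤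
      ((Fintype.card F : ℝ) ^ d + 1) ^ (a + d + f) *
        ((4 * Fintype.card F).choose k * p ^ k) := by
  obtain ⟨C, hCcard, hC⟩ := exists_containers_of_isGenPos (F := F) hd ha hf
  let s : Finset (Finset (Fin d → F) × Finset (Fin d → F)) :=
    ({A | #A ≤ a + d} : Finset _) ×ˢ ({S | #S ≤ f} : Finset _)
  have hs : (#s : ℝ) ≤ ((Fintype.card F : ℝ) ^ d + 1) ^ (a + d + f) := by
    have hcard : Fintype.card (Fin d → F) = Fintype.card F ^ d := by simp
    rw [card_product, pow_add, ← Nat.cast_pow, ← hcard]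
    exact_mod_cast Nat.mul_le_mul (card_filter_card_le_le_pow _ (a + d))
      (card_filter_card_le_le_pow _ f)
  calc bernoulliProb (Fin d → F) p (fun S => ∃ T, T ⊆ S ∧ IsGenPos F d ↑T ∧ M ≤ #T)
      ≤ #s * ((4 * Fintype.card F).choose k * p ^ k) := by
        refine bernoulliProb_le_of_containers hp0 hp1 s (C := fun i => C i.1 i.2)
          (fun i _ => hCcard i.1 i.2) ?_
        rintro S ⟨T, hTS, hT, hMT⟩
        have hTcard : a + d + f + k ≤ #T := by exact_mod_cast hM.trans hMT
        obtain ⟨A, B, hA, hB, hTAB⟩ := hC T hT (by omega)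
        refine ⟨(A, B), mem_product.mpr ⟨by simpa using hA, by simpa using hB⟩, ?_⟩
        have hTsub : T ⊆ A ∪ B ∪ (S ∩ C A B) := fun x hx => by
          have := hTAB hx
          have := hTS hx
          grind
        have := card_le_card hTsub
        grw [card_union_le, card_union_le] at this
        dsimp only
        omega
    _ ≤ _ := by gcongr

end GeneralPosition

section Parameters

variable {q d : ℕ}

theorem one_le_logb_two (hq : 2 ≤ q) : 1 ≤ Real.logb 2 q := by
  rw [Real.le_logb_iff_rpow_le one_lt_two (by positivity), Real.rpow_one]
  exact_mod_cast hq

theorem log_le_logb_two (q : ℕ) : Real.log q ≤ Real.logb 2 q :=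
  le_div_self (Real.log_natCast_nonneg q) (Real.log_pos one_lt_two)
    (Real.log_two_lt_d9.le.trans (by norm_num))

theorem pow_mul_exp_le_one (hq : 0 < q) (hd : 0 < d) {a f : ℕ} (ha : q + 1 ≤ a ^ 2)
    (hf : 4 * d ^ 2 * a * Real.logb 2 q ≤ f) :
    (q : ℝ) ^ d * Real.exp (-(a / (4 * (q + 1) * d) * f)) ≤ 1 := by
  have ha' : (q + 1 : ℝ) ≤ a ^ 2 := by exact_mod_cast ha
  have hL : 0 ≤ Real.logb 2 q := (Real.log_natCast_nonneg q).trans (log_le_logb_two q)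
  have hexponent : d * Real.log q ≤ a / (4 * (q + 1) * d) * f := by
    calc d * Real.log q ≤ d * Real.logb 2 q := by gcongr; exact log_le_logb_two q
      _ = d * Real.logb 2 q * (q + 1) / (q + 1) := by field_simp
      _ ≤ d * Real.logb 2 q * a ^ 2 / (q + 1) := by gcongr
      _ = a / (4 * (q + 1) * d) * (4 * d ^ 2 * a * Real.logb 2 q) := by field_simp
      _ ≤ a / (4 * (q + 1) * d) * f := by gcongr
  calc (q : ℝ) ^ d * Real.exp (-(a / (4 * (q + 1) * d) * f))
      = Real.exp (d * Real.log q) * Real.exp (-(a / (4 * (q + 1) * d) * f)) := by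
        rw [Real.exp_nat_mul, Real.exp_log (by exact_mod_cast hq)]
    _ ≤ 1 := by
        rw [← Real.exp_add, Real.exp_le_one_iff]
        linarith

theorem exists_seed_and_fingerprint_size (hq : 2 ≤ q) (hd : 0 < d) :
    ∃ a f : ℕ, 0 < a ∧ (q : ℝ) ^ d * Real.exp (-(a / (4 * (q + 1) * d) * f)) ≤ 1 ∧
      (a + d + f + 1 : ℝ) ≤ 13 * d ^ 2 * (√q * Real.logb 2 q) := by
  have hL := one_le_logb_two hq
  have hd' : (1 : ℝ) ≤ d := by exact_mod_cast hd
  have hsqrt : 1 ≤ √(q : ℝ) := Real.one_le_sqrt.mpr (by exact_mod_cast (by omega : 1 ≤ q))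
  set L := Real.logb 2 q
  set a := Nat.sqrt q + 1 with ha_def
  have ha : (a : ℝ) ≤ 2 * √q := by
    push_cast [ha_def]
    linarith [Real.nat_sqrt_le_real_sqrt (a := q)]
  refine ⟨a, ⌈4 * d ^ 2 * a * L⌉₊, Nat.succ_pos _,
    pow_mul_exp_le_one (by omega) hd (Nat.lt_succ_sqrt' q) (Nat.le_ceil _), ?_⟩
  have hceil : (⌈4 * d ^ 2 * a * L⌉₊ : ℝ) ≤ 8 * d ^ 2 * (√q * L) + 1 := by
    calc (⌈4 * d ^ 2 * a * L⌉₊ : ℝ) ≤ 4 * d ^ 2 * a * L + 1 :=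
          (Nat.ceil_lt_add_one (by positivity)).le
      _ ≤ 4 * d ^ 2 * (2 * √q) * L + 1 := by gcongr
      _ = 8 * d ^ 2 * (√q * L) + 1 := by ring
  have hsqrtL : √q ≤ d ^ 2 * (√q * L) :=
    (le_mul_of_one_le_right (by positivity) hL).trans
      (le_mul_of_one_le_left (by positivity) (one_le_pow₀ hd'))
  have hdL : (d : ℝ) ≤ d ^ 2 * (√q * L) :=
    (le_self_pow₀ hd' two_ne_zero).trans
      (le_mul_of_one_le_right (by positivity) (one_le_mul_of_one_le_of_one_le hsqrt hL))
  linarith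

theorem pow_add_one_pow_le_two_pow (hq : 2 ≤ q) (hd : 0 < d) {n k : ℕ}
    (hk : 2 * d * n * Real.logb 2 q ≤ k) : ((q : ℝ) ^ d + 1) ^ n ≤ 2 ^ k := by
  have hq' : (2 : ℝ) ≤ q := by exact_mod_cast hq
  have hqd : (2 : ℝ) ≤ q ^ d := hq'.trans (le_self_pow₀ (by linarith) hd.ne')
  calc ((q : ℝ) ^ d + 1) ^ n ≤ (q ^ d * q ^ d) ^ n := by gcongr; nlinarith
    _ = (q : ℝ) ^ (2 * d * n) := by ring
    _ = (2 : ℝ) ^ (Real.logb 2 q * (2 * d * n : ℕ)) := by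
        rw [Real.rpow_mul zero_le_two, Real.rpow_logb two_pos (by norm_num) (by positivity),
          Real.rpow_natCast]
    _ ≤ (2 : ℝ) ^ (k : ℝ) := by
        refine Real.rpow_le_rpow_of_exponent_le one_le_two ?_
        push_cast
        linarith
    _ = 2 ^ k := Real.rpow_natCast 2 k

theorem exists_seed_fingerprint_and_overlap_size (hq : 2 ≤ q) (hd : 0 < d) {M : ℝ}
    (hM : 100 * d ^ 3 * (√q * Real.logb 2 q ^ 2) ≤ M) :
    ∃ a f k : ℕ, 0 < a ∧
      (q : ℝ) ^ d * Real.exp (-(a / (4 * (q + 1) * d) * f)) ≤ 4 * q ∧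
      (a + d + f + k : ℕ) ≤ M ∧ M / 2 ≤ k ∧ ((q : ℝ) ^ d + 1) ^ (a + d + f) ≤ 2 ^ k := by
  obtain ⟨a, f, ha, hf, hsize⟩ := exists_seed_and_fingerprint_size hq hd
  have hL := one_le_logb_two hq
  have hd' : (1 : ℝ) ≤ d := by exact_mod_cast hd
  set L := Real.logb 2 q
  have hM0 : 0 ≤ M := le_trans (by positivity) hM
  have hk : M / 2 ≤ ⌈M / 2⌉₊ := Nat.le_ceil _
  have hk' : (⌈M / 2⌉₊ : ℝ) < M / 2 + 1 := Nat.ceil_lt_add_one (by linarith)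
  have hsize' : (a + d + f + 1 : ℝ) ≤ M / 2 := by
    calc (a + d + f + 1 : ℝ) ≤ 13 * d ^ 2 * (√q * L) := hsize
      _ ≤ 50 * d ^ 3 * (√q * L ^ 2) := by
        have hL2 : L ≤ L ^ 2 := le_self_pow₀ hL two_ne_zero
        gcongr <;> norm_num
      _ ≤ M / 2 := by linarith
  refine ⟨a, f, ⌈M / 2⌉₊, ha, hf.trans (by norm_cast; omega), ?_, hk,
    pow_add_one_pow_le_two_pow hq hd ?_⟩
  · push_cast
    linarith
  · calc 2 * d * (a + d + f : ℕ) * L ≤ 2 * d * (13 * d ^ 2 * (√q * L)) * L := by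
          gcongr
          push_cast
          linarith
      _ = 26 * d ^ 3 * (√q * L ^ 2) := by ring
      _ ≤ 50 * d ^ 3 * (√q * L ^ 2) := by gcongr; norm_num
      _ ≤ ⌈M / 2⌉₊ := by linarith

theorem sqrt_le_rpow_div_add_one (hd : 0 < d) {x : ℝ} (hx : 1 ≤ x) :
    √x ≤ x ^ ((d : ℝ) / (d + 1)) := by
  rw [Real.sqrt_eq_rpow]
  refine Real.rpow_le_rpow_of_exponent_le hx ?_
  rw [div_le_div_iff₀ two_pos (by positivity)]
  have hd' : (1 : ℝ) ≤ d := by exact_mod_cast hd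
  linarith

theorem rpow_neg_one_div_mul (d : ℕ) {x : ℝ} (hx : 0 < x) (y : ℝ) :
    x ^ (-(1 : ℝ) / (d + 1)) * y = x ^ ((d : ℝ) / (d + 1)) * y / x := by
  rw [mul_div_right_comm, ← Real.rpow_sub_one hx.ne']
  congr 2
  field_simp
  ring

theorem eventually_half_rpow_sqrt_le {δ : ℝ} (hδ : 0 < δ) :
    ∀ᶠ q : ℕ in Filter.atTop, (1 / 2 : ℝ) ^ (√q / 2) ≤ δ := by
  have hsqrt : Filter.Tendsto (fun q : ℕ => √(q : ℝ) / 2) Filter.atTop Filter.atTop :=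
    (Real.tendsto_sqrt_atTop.comp tendsto_natCast_atTop_atTop).atTop_div_const two_pos
  exact ((tendsto_rpow_atTop_of_base_lt_one (1 / 2) (by norm_num) (by norm_num)).comp
    hsqrt).eventually_le_const hδ

end Parameters

theorem random_turan_upper_Fqd_high_range_general {F : Type*} [Field F] [Fintype F] {d : ℕ}
    (hd : 0 < d) {p M : ℝ} (hp0 : 0 ≤ p) (hp1 : p ≤ 1)
    (hM : 100 * d ^ 3 * max (p * Fintype.card F)
      (√(Fintype.card F) * Real.logb 2 (Fintype.card F) ^ 2) ≤ M) :
    bernoulliProb (Fin d → F) p (fun S => ∃ T, T ⊆ S ∧ IsGenPos F d ↑T ∧ M ≤ #T) ≤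
      (1 / 2) ^ (M / 2) := by
  set q := Fintype.card F
  set L := Real.logb 2 q
  have hd3 : (1 : ℝ) ≤ d ^ 3 := one_le_pow₀ (by exact_mod_cast hd)
  have hMp : 100 * d ^ 3 * (p * q) ≤ M := le_trans (by gcongr; exact le_max_left _ _) hM
  have hML : 100 * d ^ 3 * (√q * L ^ 2) ≤ M := le_trans (by gcongr; exact le_max_right _ _) hM
  obtain ⟨a, f, k, ha, hf, hsize, hk, hcount⟩ :=
    exists_seed_fingerprint_and_overlap_size Fintype.one_lt_card hd hML
  have hpq : 12 * (p * (4 * q : ℕ)) ≤ k := by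
    have := le_mul_of_one_le_left (by positivity : 0 ≤ p * q) hd3
    push_cast
    linarith
  calc bernoulliProb (Fin d → F) p (fun S => ∃ T, T ⊆ S ∧ IsGenPos F d ↑T ∧ M ≤ #T)
      ≤ ((q : ℝ) ^ d + 1) ^ (a + d + f) * ((4 * q).choose k * p ^ k) :=
        bernoulliProb_exists_isGenPos_le hp0 hp1 hd ha hf hsize
    _ ≤ 2 ^ k * (1 / 4) ^ k := by
        gcongr
        exact choose_mul_pow_le_inv_four_pow hp0 hpq
    _ = (1 / 2 : ℝ) ^ (k : ℝ) := by rw [← mul_pow, Real.rpow_natCast]; norm_num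
    _ ≤ (1 / 2) ^ (M / 2) :=
        Real.rpow_le_rpow_of_exponent_ge (by norm_num) (by norm_num) hk

theorem exists_forall_bernoulliProb_exists_isGenPos_le {d : ℕ} (hd : 0 < d) {δ : ℝ} (hδ : 0 < δ) :
    ∃ Q : ℕ, ∀ (F : Type*) [Field F] [Fintype F], Q ≤ Fintype.card F → ∀ p M : ℝ, 0 ≤ p → p ≤ 1 →
      100 * d ^ 3 * max (p * Fintype.card F)
        (√(Fintype.card F) * Real.logb 2 (Fintype.card F) ^ 2) ≤ M →
      bernoulliProb (Fin d → F) p (fun S => ∃ T, T ⊆ S ∧ IsGenPos F d ↑T ∧ M ≤ #T) ≤ δ := by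
  obtain ⟨Q, hQ⟩ := Filter.eventually_atTop.mp (eventually_half_rpow_sqrt_le hδ)
  refine ⟨Q, fun F _ _ hF p M hp0 hp1 hM => ?_⟩
  refine (random_turan_upper_Fqd_high_range_general hd hp0 hp1 hM).trans (le_trans ?_ (hQ _ hF))
  have hd3 : (1 : ℝ) ≤ d ^ 3 := one_le_pow₀ (by exact_mod_cast hd)
  have hL : 1 ≤ Real.logb 2 (Fintype.card F) := one_le_logb_two Fintype.one_lt_card
  have hsqrt : √(Fintype.card F) ≤ M := by
    calc √(Fintype.card F)
        ≤ √(Fintype.card F) * Real.logb 2 (Fintype.card F) ^ 2 :=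
          le_mul_of_one_le_right (Real.sqrt_nonneg _) (one_le_pow₀ hL)
      _ ≤ max (p * Fintype.card F) (√(Fintype.card F) * Real.logb 2 (Fintype.card F) ^ 2) :=
          le_max_right _ _
      _ ≤ 100 * d ^ 3 * max (p * Fintype.card F)
          (√(Fintype.card F) * Real.logb 2 (Fintype.card F) ^ 2) :=
          le_mul_of_one_le_left (le_max_of_le_left (by positivity)) (by linarith)
      _ ≤ M := hM
  exact Real.rpow_le_rpow_of_exponent_ge (by norm_num) (by norm_num) (by linarith)

/-- Upper bounds for the largest general position subset of a
`p`-random subset of `𝔽_q^d` in the two upper ranges of `p`. -/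
theorem random_turan_upper_Fqd_high_range (d : ℕ) (hd : 2 ≤ d) :
    ∃ c : ℝ, 0 < c ∧ ∀ δ : ℝ, 0 < δ → ∃ Q : ℕ, ∀ q : ℕ, Q ≤ q → IsPrimePow q →
      ∀ (F : Type) [Field F] [Fintype F], Fintype.card F = q →
        ∀ p : ℝ, 0 ≤ p → p ≤ 1 →
          ((p ≤ (q : ℝ) ^ (-(1 : ℝ) / ((d : ℝ) + 1)) * (Real.logb 2 q) ^ 2 →
            bernoulliProb (Fin d → F) p
              (fun S => ∃ T : Finset (Fin d → F), T ⊆ S ∧ IsGenPos F d ↑T ∧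
                c * (q : ℝ) ^ ((d : ℝ) / ((d : ℝ) + 1)) * (Real.logb 2 q) ^ 2
                  ≤ (T.card : ℝ)) ≤ δ) ∧
          ((q : ℝ) ^ (-(1 : ℝ) / ((d : ℝ) + 1)) * (Real.logb 2 q) ^ 2 ≤ p →
            bernoulliProb (Fin d → F) p
              (fun S => ∃ T : Finset (Fin d → F), T ⊆ S ∧ IsGenPos F d ↑T ∧
                c * p * (q : ℝ) ≤ (T.card : ℝ)) ≤ δ)) := by
  refine ⟨100 * d ^ 3, by positivity, fun δ hδ => ?_⟩
  obtain ⟨Q, hQ⟩ := exists_forall_bernoulliProb_exists_isGenPos_le (by omega : 0 < d) hδ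
  refine ⟨Q, fun q hQq _ F _ _ hF p hp0 hp1 => ?_⟩
  subst hF
  have hq : (1 : ℝ) ≤ Fintype.card F := by exact_mod_cast Fintype.card_pos
  have hsqrt : √(Fintype.card F) * Real.logb 2 (Fintype.card F) ^ 2 ≤
      (Fintype.card F : ℝ) ^ ((d : ℝ) / (d + 1)) * Real.logb 2 (Fintype.card F) ^ 2 := by
    gcongr
    exact sqrt_le_rpow_div_add_one (by omega) hq
  rw [rpow_neg_one_div_mul d (by positivity), le_div_iff₀ (by positivity),
    div_le_iff₀ (by positivity)]
  refine ⟨fun hp => hQ F hQq p _ hp0 hp1 ?_, fun hp => hQ F hQq p _ hp0 hp1 ?_⟩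
  · rw [mul_assoc _ _ (_ ^ 2)]
    gcongr
    exact max_le hp hsqrt
  · rw [mul_assoc _ p]
    gcongr
    exact max_le le_rfl (hsqrt.trans hp)
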